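/- Let G = (V,E) be a finite connected graph with symmetric irreflexive edge relation, let T ⊆ V be nonempty, and let φ and φ* be flows on G satisfying flow conservation for the injections q : V → ℝ and q* : V → ℝ respectively. If q_i ≥ q*_i for all i ∈ V \ T, then for every node u ∈ V \ T there exists a directed path {i_1, …, i_n} of pairwise distinct vertices with i_1 ∈ T, i_n = u, and φ*_{i_l i_{l+1}} ≥ φ_{i_l i_{l+1}} for every 1 ≤ l ≤ n−1. -/

import Mathlib

open Finset

/-- A reflexive-transitive chain can be shortened to a chain through distinct points. -/
theorem exists_injective_path_of_reflTransGen {α : Type*} {r : α → α → Prop} {a b : α}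
    (h : Relation.ReflTransGen r a b) :
    ∃ (n : ℕ) (p : Fin (n + 1) → α), Function.Injective p ∧ p 0 = a ∧ p (Fin.last n) = b ∧
      ∀ l : Fin n, r (p l.castSucc) (p l.succ) := by
  induction h using Relation.ReflTransGen.head_induction_on with
  | refl => exact ⟨0, fun _ => b, fun x y _ => Fin.ext (by omega), rfl, rfl, fun l => l.elim0⟩
  | @head a c hac _ ih =>
    obtain ⟨n, p, hinj, h0, hlast, hp⟩ := ih
    by_cases ha : ∃ k, p k = a
    · obtain ⟨⟨k, hk⟩, hka⟩ := ha
      obtain ⟨m, rfl⟩ := Nat.exists_eq_add_of_le (Nat.lt_succ_iff.mp hk)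
      refine ⟨m, fun l => p ⟨k + l, by omega⟩, fun x y hxy => ?_, hka, hlast,
        fun l => hp ⟨k + l, by omega⟩⟩
      have := congrArg Fin.val (hinj hxy)
      exact Fin.ext (by simpa using this)
    · refine ⟨n + 1, Fin.cons a p, Fin.cons_injective_iff.mpr ⟨ha, hinj⟩, rfl, ?_, fun l => ?_⟩
      · rw [← Fin.succ_last, Fin.cons_succ, hlast]
      · cases l using Fin.cases with
        | zero => simpa [h0] using hac
        | succ l => simpa [← Fin.succ_castSucc] using hp l

/-- An antisymmetric function sums to zero over a square. -/
theorem sum_sum_eq_zero_of_antisymm {α : Type*} (s : Finset α) {f : α → α → ℝ}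
    (hf : ∀ i j, f i j = -f j i) : ∑ i ∈ s, ∑ j ∈ s, f j i = 0 := by
  have h : ∑ i ∈ s, ∑ j ∈ s, f j i = -∑ i ∈ s, ∑ j ∈ s, f j i := by
    conv_lhs => rw [sum_comm]
    simp only [← sum_neg_distrib, ← hf]
  linarith

/-- A relation chain that ends in a set and starts outside it crosses into the set. -/
theorem exists_rel_entering_of_reflTransGen {α : Type*} {r : α → α → Prop} {s : Set α} {a b : α}
    (h : Relation.ReflTransGen r a b) (ha : a ∉ s) (hb : b ∈ s) :
    ∃ j i, r j i ∧ j ∉ s ∧ i ∈ s := by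
  by_contra! hs
  exact h.rec (motive := fun c _ => c ∉ s) ha (fun _ hr hc => hs _ _ hr hc) hb

/-- **Aquarius Theorem** (weak inequalities): in a finite connected graph with a
symmetric irreflexive edge relation, if two conserved flows `φ`, `φs` have
injections `q ≥ qs` outside a nonempty set `T`, then from every `u ∉ T` there is
a directed path of pairwise distinct vertices from some node of `T` to `u`
along which `φs ≥ φ` edgewise. -/
theorem aquarius_theorem_weak
    {V : Type*} [Fintype V] [DecidableEq V] [Nonempty V]
    (E : V → V → Prop) [DecidableRel E]
    (hsymm : ∀ i j, E i j → E j i)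
    (hirrefl : ∀ i, ¬ E i i)
    (hconn : ∀ u v : V, Relation.ReflTransGen E u v)
    (T : Finset V) (hT : T.Nonempty)
    (φ φs : V → V → ℝ)
    (hskew : ∀ i j, E i j → φ i j = - φ j i)
    (hskews : ∀ i j, E i j → φs i j = - φs j i)
    (q qs : V → ℝ)
    (hcons : ∀ i : V, (∑ j ∈ univ.filter (fun j => E j i), φ j i) + q i = 0)
    (hconss : ∀ i : V, (∑ j ∈ univ.filter (fun j => E j i), φs j i) + qs i = 0)
    (hq : ∀ i : V, i ∉ T → q i ≥ qs i) :
    ∀ u : V, u ∉ T →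
      ∃ (n : ℕ) (p : Fin (n + 1) → V),
        Function.Injective p ∧
        p 0 ∈ T ∧
        p (Fin.last n) = u ∧
        (∀ l : Fin n, E (p l.castSucc) (p l.succ)) ∧
        (∀ l : Fin n, φs (p l.castSucc) (p l.succ) ≥ φ (p l.castSucc) (p l.succ)) := by
  intro u hu
  let r : V → V → Prop := fun i j => E i j ∧ φs i j ≥ φ i j
  suffices h : ∃ t ∈ T, Relation.ReflTransGen r t u by
    obtain ⟨t, ht, htu⟩ := h
    obtain ⟨n, p, hinj, h0, hlast, hp⟩ := exists_injective_path_of_reflTransGen htu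
    exact ⟨n, p, hinj, h0 ▸ ht, hlast, fun l => (hp l).1, fun l => (hp l).2⟩
  by_contra! hT'
  classical
  let U : Finset V := univ.filter fun w => Relation.ReflTransGen r w u
  have hmem : ∀ w, w ∈ U ↔ Relation.ReflTransGen r w u := by simp [U]
  let f : V → V → ℝ := fun j i => if E j i then φs j i - φ j i else 0
  have hf : ∀ i j, f i j = -f j i := by
    intro i j
    by_cases hij : E i j
    · simp only [f, hij, hsymm i j hij, if_true, hskew i j hij, hskews i j hij]
      ring
    · have hji : ¬ E j i := fun h => hij (hsymm j i h)
      simp [f, hij, hji]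
  have hdiv : ∀ i, ∑ j, f j i = q i - qs i := by
    intro i
    simp only [f, ← sum_filter, sum_sub_distrib]
    linarith [hcons i, hconss i]
  have hnonneg : 0 ≤ ∑ i ∈ U, ∑ j, f j i := by
    refine sum_nonneg fun i hi => ?_
    have := hq i fun hiT => hT' i hiT ((hmem i).mp hi)
    rw [hdiv]
    linarith
  have hsplit : ∑ i ∈ U, ∑ j, f j i = ∑ i ∈ U, ∑ j ∈ Uᶜ, f j i := by
    simp only [← sum_add_sum_compl U, sum_add_distrib, sum_sum_eq_zero_of_antisymm U hf, zero_add]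
  have hlt : ∀ i ∈ U, ∀ j ∈ Uᶜ, E j i → f j i < 0 := by
    intro i hi j hj hji
    by_contra! hle
    refine mem_compl.mp hj ((hmem j).mpr (((hmem i).mp hi).head ⟨hji, ?_⟩))
    simpa [f, hji] using hle
  have hle : ∀ i ∈ U, ∀ j ∈ Uᶜ, f j i ≤ 0 := by
    intro i hi j hj
    by_cases hji : E j i
    · exact (hlt i hi j hj hji).le
    · simp [f, hji]
  obtain ⟨t, ht⟩ := hT
  obtain ⟨j, i, hji, hj, hi⟩ := exists_rel_entering_of_reflTransGen (s := (U : Set V)) (hconn t u)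
    (fun h => hT' t ht ((hmem t).mp h)) ((hmem u).mpr .refl)
  have hj' : j ∈ Uᶜ := mem_compl.mpr hj
  have hneg : ∑ i ∈ U, ∑ j ∈ Uᶜ, f j i < 0 :=
    sum_neg' (fun i hi => sum_nonpos (hle i hi))
      ⟨i, hi, sum_neg' (hle i hi) ⟨j, hj', hlt i hi j hj' hji⟩⟩
  linarith
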